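/- Let 𝒯 be a finite set of types, τ : 𝒮 → 𝒯, and for each t ∈ 𝒯 let r_t, p_t be nonnegative integers with r_t ≤ p_t. For S ⊆ 𝒮 and t ∈ 𝒯, write S_t := {s ∈ S : τ(s) = t}, and let n be an integer with n > |𝒮|. Define the error function e_t(S) := −n·(r_t − |S_t|) if |S_t| < r_t; e_t(S) := 0 if r_t ≤ |S_t| ≤ p_t; and e_t(S) := −(|S_t| − p_t) if |S_t| > p_t. Define the soft distributional preference by: S ≿ S' iff Σ_{t ∈ 𝒯} e_t(S) ≥ Σ_{t ∈ 𝒯} e_t(S'). Then ≿ satisfies the upper-bound property, the maximizer property, and the improvement property. -/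

import Mathlib

open Finset

variable {α : Type*}

/-- Strict part of a distributional preference. -/
def strictPref (pref : Finset α → Finset α → Prop) (A B : Finset α) : Prop :=
  pref A B ∧ ¬ pref B A

/-- Indifference part of a distributional preference. -/
def indiffPref (pref : Finset α → Finset α → Prop) (A B : Finset α) : Prop :=
  pref A B ∧ pref B A

/-- Incomparability under a distributional preference. -/
def incomparable (pref : Finset α → Finset α → Prop) (A B : Finset α) : Prop :=
  ¬ pref A B ∧ ¬ pref B A

/-- `NW q S` is the collection of non-wasteful subsets of `S`. -/
def NW (q : ℕ) (S : Finset α) : Set (Finset α) :=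
  {T | T ⊆ S ∧ T.card = min q S.card}

/-- The frontier of `S`: non-wasteful subsets undominated w.r.t. the preference. -/
def frontierSet (pref : Finset α → Finset α → Prop) (q : ℕ) (S : Finset α) :
    Set (Finset α) :=
  {T | T ∈ NW q S ∧ ∀ T' ∈ NW q S, ¬ strictPref pref T' T}

/-- The upper-bound property of a distributional preference. -/
def upperBoundProperty [DecidableEq α] (pref : Finset α → Finset α → Prop) (q : ℕ) : Prop :=
  ∀ S S' : Finset α, S.card = q → S'.card = q → incomparable pref S S' →
    ∃ S'' ∈ NW q (S ∪ S'), strictPref pref S'' S ∨ strictPref pref S'' S'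

/-- The maximizer property of a distributional preference. -/
def maximizerProperty [DecidableEq α] (pref : Finset α → Finset α → Prop) (q : ℕ) : Prop :=
  ∀ S S' : Finset α, S ≠ S' → S.card = q → S'.card = q →
    (∀ S'' ∈ NW q (S ∪ S'), pref S S'' ∧ pref S' S'') →
    ∃ s ∈ S \ S', ∃ s' ∈ S' \ S,
      indiffPref pref (S.erase s ∪ {s'}) S ∧ indiffPref pref (S'.erase s' ∪ {s}) S'

/-- The improvement property of a distributional preference. -/
def improvementProperty [DecidableEq α] (pref : Finset α → Finset α → Prop) (q : ℕ) : Prop :=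
  ∀ S S' : Finset α, S.card = q → S'.card = q → ∀ s ∈ S \ S',
    (∀ S'' ∈ NW q (S ∪ S'), s ∉ S'' → strictPref pref S S'') →
    (∀ S'' ∈ NW q (S ∪ S'), s ∈ S'' → pref S S'') →
    ∃ s' ∈ S' \ S, strictPref pref (S'.erase s' ∪ {s}) S'

/-- A choice rule is non-wasteful. -/
def nonWasteful (q : ℕ) (Ch : Finset α → Finset α) : Prop :=
  ∀ S : Finset α, (Ch S).card = min q S.card

/-- A choice rule promotes the distributional preference. -/
def promotesPref (pref : Finset α → Finset α → Prop) (Ch : Finset α → Finset α) : Prop :=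
  ∀ S : Finset α, ∀ S' ⊆ S, S'.card = (Ch S).card → ¬ strictPref pref S' (Ch S)

/-- A choice rule guarantees no justified envy with respect to priority ranking `π`. -/
def noJustifiedEnvy [DecidableEq α] (pref : Finset α → Finset α → Prop)
    (π : α → α → Prop) (Ch : Finset α → Finset α) : Prop :=
  ∀ S : Finset α, ∀ s ∈ Ch S, ∀ s' ∈ S \ Ch S,
    pref ((Ch S).erase s ∪ {s'}) (Ch S) → π s s'

/-- Path independence of a choice rule. -/
def pathIndependent [DecidableEq α] (Ch : Finset α → Finset α) : Prop :=
  ∀ S S' : Finset α, Ch (S ∪ S') = Ch (Ch S ∪ S')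

/-- Consistency of a choice rule. -/
def consistentRule [DecidableEq α] (Ch : Finset α → Finset α) : Prop :=
  ∀ S : Finset α, ∀ s ∈ S, s ∉ Ch S → Ch (S.erase s) = Ch S

/-- Substitutability of a choice rule. -/
def substitutableRule [DecidableEq α] (Ch : Finset α → Finset α) : Prop :=
  ∀ S : Finset α, ∀ s ∈ S, ∀ s' ∈ S, s ≠ s' → s ∈ Ch S → s ∈ Ch (S.erase s')

/-- `l` lists the elements of `A` in strictly decreasing `π`-priority. -/
def descList [DecidableEq α] (π : α → α → Prop) (A : Finset α) (l : List α) : Prop :=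
  l.Pairwise π ∧ l.Nodup ∧ l.toFinset = A

/-- `A` priority dominates `B` with respect to `π`. -/
def priorityDominates [DecidableEq α] (π : α → α → Prop) (A B : Finset α) : Prop :=
  B.card ≤ A.card ∧
  ∀ la lb : List α, descList π A la → descList π B lb →
    ∀ (k : ℕ) (ha : k < la.length) (hb : k < lb.length),
      la.get ⟨k, ha⟩ = lb.get ⟨k, hb⟩ ∨ π (la.get ⟨k, ha⟩) (lb.get ⟨k, hb⟩)

/-- The revealed preference axiom for a choice rule: no revealed-priority cycles. -/
def revealedPrefAxiom [DecidableEq α] (pref : Finset α → Finset α → Prop)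
    (Ch : Finset α → Finset α) : Prop :=
  ¬ ∃ (K : ℕ) (s : ℕ → α) (T : ℕ → Finset α), 0 < K ∧ s K = s 0 ∧
    ∀ k < K, s k ∈ Ch (T k) ∧ s (k + 1) ∈ T k \ Ch (T k) ∧
      pref ((Ch (T k)).erase (s k) ∪ {s (k + 1)}) (Ch (T k))

/-- The error of a set `S` at type `t`, penalizing floor violations by a large
factor `n` and ceiling violations one-for-one. -/
def errFn {α β : Type*} [DecidableEq β] (τ : α → β) (r p : β → ℕ) (n : ℤ)
    (t : β) (S : Finset α) : ℤ :=
  if (S.filter fun s => τ s = t).card < r t then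
    -n * ((r t : ℤ) - ((S.filter fun s => τ s = t).card : ℤ))
  else if (S.filter fun s => τ s = t).card ≤ p t then 0
  else -(((S.filter fun s => τ s = t).card : ℤ) - (p t : ℤ))

/-- The soft distributional preference: compare total errors. -/
def softPref {α β : Type*} [Fintype β] [DecidableEq β] (τ : α → β)
    (r p : β → ℕ) (n : ℤ) (A B : Finset α) : Prop :=
  (∑ t : β, errFn τ r p n t B) ≤ ∑ t : β, errFn τ r p n t A

/-- number of elements of type `t`. -/
def cnt16 {α β : Type*} [DecidableEq β] (τ : α → β) (S : Finset α) (t : β) : ℕ :=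
  (S.filter fun s => τ s = t).card

/-- marginal value of the `k+1`-st element of type `t`. -/
def marg16 {β : Type*} (r p : β → ℕ) (n : ℤ) (t : β) (k : ℕ) : ℤ :=
  if k < r t then n else if k < p t then 0 else -1

/-- total error. -/
def tot16 {α β : Type*} [Fintype β] [DecidableEq β] (τ : α → β)
    (r p : β → ℕ) (n : ℤ) (A : Finset α) : ℤ := ∑ t : β, errFn τ r p n t A

lemma marg16_anti {β : Type*} (r p : β → ℕ) (n : ℤ) (hn : 0 < n) (hrp : ∀ t : β, r t ≤ p t)
    (t : β) {k l : ℕ} (h : k ≤ l) : marg16 r p n t l ≤ marg16 r p n t k := by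
  have := hrp t
  unfold marg16
  split_ifs <;> omega

lemma cnt16_insert {α β : Type*} [DecidableEq α] [DecidableEq β] (τ : α → β) (T : Finset α)
    (x : α) (hx : x ∉ T) (t : β) :
    cnt16 τ (insert x T) t = cnt16 τ T t + if τ x = t then 1 else 0 := by
  unfold cnt16
  rw [Finset.filter_insert]
  split_ifs with h
  · rw [Finset.card_insert_of_notMem (by simp [hx])]
  · simp

lemma tot16_insert {α β : Type*} [DecidableEq α] [Fintype β] [DecidableEq β] (τ : α → β)
    (r p : β → ℕ) (n : ℤ) (hrp : ∀ t : β, r t ≤ p t) (T : Finset α) (x : α) (hx : x ∉ T) :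
    tot16 τ r p n (insert x T) = tot16 τ r p n T + marg16 r p n (τ x) (cnt16 τ T (τ x)) := by
  have key : ∀ t, errFn τ r p n t (insert x T) = errFn τ r p n t T +
      if τ x = t then marg16 r p n t (cnt16 τ T t) else 0 := by
    intro t
    have h1 := cnt16_insert τ T x hx t
    have h2 := hrp t
    unfold cnt16 at *
    unfold errFn marg16
    rw [h1]
    generalize (T.filter fun s => τ s = t).card = c
    by_cases h : τ x = t
    · simp only [h, if_true]
      push_cast
      split_ifs <;> first | omega | skip
      · ring
      · have : (r t : ℤ) = c + 1 := by omega
        rw [this]; ring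
    · simp [h]
  unfold tot16
  rw [Finset.sum_congr rfl (fun t _ => key t), Finset.sum_add_distrib]
  simp

lemma tot16_swap {α β : Type*} [DecidableEq α] [Fintype β] [DecidableEq β] (τ : α → β)
    (r p : β → ℕ) (n : ℤ) (hrp : ∀ t : β, r t ≤ p t) (S : Finset α) (s s' : α)
    (hs : s ∈ S) (hs' : s' ∉ S) :
    (τ s = τ s' → tot16 τ r p n (S.erase s ∪ {s'}) = tot16 τ r p n S) ∧
    (τ s ≠ τ s' → tot16 τ r p n (S.erase s ∪ {s'}) = tot16 τ r p n S
      - marg16 r p n (τ s) (cnt16 τ S (τ s) - 1) + marg16 r p n (τ s') (cnt16 τ S (τ s'))) := by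
  have e : S.erase s ∪ {s'} = insert s' (S.erase s) := by
    ext; simp [or_comm]
  have h1 := tot16_insert τ r p n hrp (S.erase s) s (by simp)
  have h2 := tot16_insert τ r p n hrp (S.erase s) s' (by simp [hs'])
  have c1 := cnt16_insert τ (S.erase s) s (by simp) (τ s)
  have c2 := cnt16_insert τ (S.erase s) s (by simp) (τ s')
  rw [Finset.insert_erase hs] at h1 c1 c2
  rw [e]
  constructor
  · intro h
    rw [← h] at h2
    omega
  · intro h
    simp only [h, if_false, if_true] at c1 c2
    rw [c1, c2, h2, h1]
    simp

lemma swap16_mem {α : Type*} [DecidableEq α] (q : ℕ) (S S' : Finset α) (s s' : α)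
    (hS : S.card = q) (hs : s ∈ S) (hs' : s' ∈ S') (hn : s' ∉ S) :
    S.erase s ∪ {s'} ∈ NW q (S ∪ S') := by
  have e : S.erase s ∪ {s'} = insert s' (S.erase s) := by
    ext; simp [or_comm]
  have hc : S.card ≤ (S ∪ S').card := Finset.card_le_card Finset.subset_union_left
  have hp : 0 < S.card := Finset.card_pos.mpr ⟨s, hs⟩
  refine ⟨?_, ?_⟩
  · intro x hx
    simp only [Finset.mem_union, Finset.mem_erase, Finset.mem_singleton] at hx ⊢
    rcases hx with h | h
    · exact Or.inl h.2
    · exact Or.inr (h ▸ hs')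
  · rw [e, Finset.card_insert_of_notMem (by simp [hn]), Finset.card_erase_of_mem hs]
    omega

lemma cnt16_lt {α β : Type*} [DecidableEq α] [DecidableEq β] (τ : α → β) (S S' : Finset α)
    (s : α) (hs : s ∈ S) (hs' : s ∉ S') (h : ∀ x ∈ S' \ S, τ x ≠ τ s) :
    cnt16 τ S' (τ s) < cnt16 τ S (τ s) := by
  apply Finset.card_lt_card
  rw [Finset.ssubset_iff_of_subset]
  · exact ⟨s, by simp [hs], by simp [hs']⟩
  · intro x hx
    simp only [Finset.mem_filter] at hx ⊢
    refine ⟨?_, hx.2⟩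
    by_contra hc
    exact h x (by simp [hx.1, hc]) hx.2

lemma exists16 {α : Type*} [DecidableEq α] (S S' : Finset α)
    (hc : S.card ≤ S'.card) (hne : S ≠ S') : ∃ x ∈ S', x ∉ S := by
  by_contra! h
  exact hne (Finset.eq_of_subset_of_card_le h hc).symm

/-- The soft distributional preference defined by the error
functions satisfies the upper-bound, maximizer, and improvement properties. -/
theorem stmt16 {α β : Type*} [Fintype α] [Nonempty α] [DecidableEq α]
    [Fintype β] [DecidableEq β]
    (q : ℕ) (hq : 0 < q) (τ : α → β) (r p : β → ℕ) (hrp : ∀ t : β, r t ≤ p t)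
    (n : ℤ) (hn : (Fintype.card α : ℤ) < n) :
    upperBoundProperty (softPref τ r p n) q ∧
    maximizerProperty (softPref τ r p n) q ∧
    improvementProperty (softPref τ r p n) q := by
  have hn0 : 0 < n := lt_of_le_of_lt (by positivity) hn
  refine ⟨?_, ?_, ?_⟩
  · intro S S' _ _ h
    exact absurd (le_total _ _) (not_or.mpr h)
  · intro S S' hne hS hS' hmax
    have A : ∀ s ∈ S, s ∉ S' → ∀ s' ∈ S', s' ∉ S →
        tot16 τ r p n (S.erase s ∪ {s'}) ≤ tot16 τ r p n S ∧
        tot16 τ r p n (S'.erase s' ∪ {s}) ≤ tot16 τ r p n S' := by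
      intro s h1 h2 s' h3 h4
      refine ⟨(hmax _ (swap16_mem q S S' s s' hS h1 h3 h4)).1, (hmax _ ?_).2⟩
      rw [Finset.union_comm S S']
      exact swap16_mem q S' S s' s hS' h3 h1 h2
    suffices H : ∃ s ∈ S \ S', ∃ s' ∈ S' \ S,
        tot16 τ r p n (S.erase s ∪ {s'}) = tot16 τ r p n S ∧
        tot16 τ r p n (S'.erase s' ∪ {s}) = tot16 τ r p n S' by
      obtain ⟨s, h1, s', h2, h3, h4⟩ := H
      exact ⟨s, h1, s', h2, ⟨h3.ge, h3.le⟩, ⟨h4.ge, h4.le⟩⟩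
    by_cases hx : ∃ s ∈ S \ S', ∃ s' ∈ S' \ S, τ s = τ s'
    · obtain ⟨s, h1, s', h2, h3⟩ := hx
      refine ⟨s, h1, s', h2, ?_⟩
      rw [Finset.mem_sdiff] at h1 h2
      exact ⟨(tot16_swap τ r p n hrp S s s' h1.1 h2.2).1 h3,
        (tot16_swap τ r p n hrp S' s' s h2.1 h1.2).1 h3.symm⟩
    · push Not at hx
      obtain ⟨s', h3, h4⟩ := exists16 S S' (by omega) hne
      obtain ⟨s, h1, h2⟩ := exists16 S' S (by omega) hne.symm
      have m1 : s ∈ S \ S' := by simp [h1, h2]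
      have m2 : s' ∈ S' \ S := by simp [h3, h4]
      have l1 := cnt16_lt τ S S' s h1 h2 (fun x h => (hx s m1 x h).symm)
      have l2 := cnt16_lt τ S' S s' h3 h4 (fun x h => hx x h s' m2)
      have e1 := (tot16_swap τ r p n hrp S s s' h1 h4).2 (hx s m1 s' m2)
      have e2 := (tot16_swap τ r p n hrp S' s' s h3 h2).2 (hx s m1 s' m2).symm
      have a := A s h1 h2 s' h3 h4
      have d1 := marg16_anti r p n hn0 hrp (τ s) (Nat.le_sub_one_of_lt l1)
      have d2 := marg16_anti r p n hn0 hrp (τ s') (Nat.le_sub_one_of_lt l2)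
      refine ⟨s, m1, s', m2, ?_, ?_⟩ <;> linarith [a.1, a.2]
  · intro S S' hS hS' s hs hstr _
    rw [Finset.mem_sdiff] at hs
    obtain ⟨h1, h2⟩ := hs
    have A : ∀ s' ∈ S', s' ∉ S → tot16 τ r p n (S.erase s ∪ {s'}) < tot16 τ r p n S := by
      intro s' h3 h4
      have := (hstr _ (swap16_mem q S S' s s' hS h1 h3 h4) (by
        simp only [Finset.mem_union, Finset.mem_erase, Finset.mem_singleton]
        rintro (h | h)
        · exact h.1 rfl
        · exact h4 (h ▸ h1))).2
      exact not_le.mp this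
    have hx : ∀ x ∈ S' \ S, τ x ≠ τ s := by
      intro x hx he
      rw [Finset.mem_sdiff] at hx
      exact (A x hx.1 hx.2).ne ((tot16_swap τ r p n hrp S s x h1 hx.2).1 he.symm)
    have l1 := cnt16_lt τ S S' s h1 h2 hx
    have hu : ∃ u, cnt16 τ S u < cnt16 τ S' u := by
      by_contra! hc
      have : ∑ u, cnt16 τ S' u < ∑ u, cnt16 τ S u :=
        Finset.sum_lt_sum (fun u _ => hc u) ⟨τ s, Finset.mem_univ _, l1⟩
      have k1 : S.card = ∑ u, cnt16 τ S u :=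
        Finset.card_eq_sum_card_fiberwise (fun _ _ => by simp)
      have k2 : S'.card = ∑ u, cnt16 τ S' u :=
        Finset.card_eq_sum_card_fiberwise (fun _ _ => by simp)
      omega
    obtain ⟨u, l2⟩ := hu
    obtain ⟨s', h3, h4, rfl⟩ : ∃ s' ∈ S', s' ∉ S ∧ τ s' = u := by
      by_contra! hc
      refine absurd (Finset.card_le_card (?_ : (S'.filter fun s => τ s = u) ⊆ _)) (not_le.mpr l2)
      intro x hx
      simp only [Finset.mem_filter] at hx ⊢
      refine ⟨?_, hx.2⟩
      by_contra hh
      exact hc x hx.1 hh hx.2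
    have m2 : s' ∈ S' \ S := by simp [h3, h4]
    refine ⟨s', m2, ?_⟩
    have e1 := (tot16_swap τ r p n hrp S s s' h1 h4).2 (hx s' m2).symm
    have e2 := (tot16_swap τ r p n hrp S' s' s h3 h2).2 (hx s' m2)
    have a := A s' h3 h4
    have d1 := marg16_anti r p n hn0 hrp (τ s) (Nat.le_sub_one_of_lt l1)
    have d2 := marg16_anti r p n hn0 hrp (τ s') (Nat.le_sub_one_of_lt l2)
    have : tot16 τ r p n S' < tot16 τ r p n (S'.erase s' ∪ {s}) := by linarith
    exact ⟨this.le, not_le.mpr this⟩
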